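/- Sufficient condition for ex post SPO stability: Let f be a partial ex ante strategy for a proper delegation game with player types (s, c, ε) drawn with stakes s_i > 0, costs c_i ∈ [c_min, c_max] with c_min ≥ 0, and idle utilities ε_i > 0. If 0 < Def(f) ≤ Del(f) ≤ Cap(f), then f is ex post SPO stable for this draw of types: there exists a joint strategy profile p consistent with f which is a pure Nash equilibrium. Moreover p can be chosen so that a player i with f(s_i, c_i, ε_i) = 0 is idle if r·s_i < ε_i and is a delegator to feasible pools if r·s_i ≥ ε_i, where r = α(s*, c_min) and s* is as below. -/

import Mathlib

open scoped Classical

/-- A proper delegation game `G(ρ, τ, (s, c, ε))` with `n` players.  Player `i` has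
stake `s i > 0`, pool operation cost `c i` with `0 ≤ cmin ≤ c i`, and idle utility
`eps i > 0`.  The pool reward function is capped separable with cap `tau > max_i s i`:
`ρ(λ,β) = a λ + b λ * min (τ − λ) β`, and the threat of deviation
`α(s,c) = (a s − c)/s` is monotonically nondecreasing in `s` on `(0, max_i s i]`. -/
structure ProperDelegationGame (n : ℕ) where
  s : Fin n → ℝ
  c : Fin n → ℝ
  eps : Fin n → ℝ
  a : ℝ → ℝ
  b : ℝ → ℝ
  tau : ℝ
  cmin : ℝ
  s_pos : ∀ i, 0 < s i
  eps_pos : ∀ i, 0 < eps i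
  cmin_nonneg : 0 ≤ cmin
  cmin_le : ∀ i, cmin ≤ c i
  a_nonneg : ∀ x : ℝ, 0 ≤ x → 0 ≤ a x
  b_nonneg : ∀ x : ℝ, 0 ≤ x → 0 ≤ b x
  tau_gt : ∀ i, s i < tau
  alpha_mono : ∀ x y : ℝ, 0 < x → x ≤ y → (∃ i, y ≤ s i) →
    (a x - cmin) / x ≤ (a y - cmin) / y

namespace ProperDelegationGame

/-- An action of a player: remain idle, operate a stake pool, or delegate
according to a delegation profile `d : Fin n → ℝ`. -/
inductive Action (n : ℕ) where
  | idle : Action n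
  | spo : Action n
  | deleg : (Fin n → ℝ) → Action n

variable {n : ℕ}

/-- A valid action for player `i`: a delegation profile must assign nothing to `i`
itself, be nonnegative, and distribute exactly the stake `s i`. -/
def ValidAction (g : ProperDelegationGame n) (i : Fin n) : Action n → Prop
  | .idle => True
  | .spo => True
  | .deleg d => d i = 0 ∧ (∀ j, 0 ≤ d j) ∧ ∑ j, d j = g.s i

/-- A valid joint strategy profile. -/
def ValidProfile (g : ProperDelegationGame n) (p : Fin n → Action n) : Prop :=
  ∀ i, g.ValidAction i (p i)

/-- Player `i` is a stake pool operator under `p`. -/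
def isSPO (p : Fin n → Action n) (i : Fin n) : Prop := p i = Action.spo

/-- Player `i` is a delegator under `p`. -/
def isDeleg (p : Fin n → Action n) (i : Fin n) : Prop := ∃ d, p i = Action.deleg d

/-- The amount that player `i` delegates to pool `j` under `p`. -/
def delegAmt (p : Fin n → Action n) (i j : Fin n) : ℝ :=
  match p i with
  | .deleg d => d j
  | _ => 0

/-- The pledge of pool `j`: `s j` if `j` is an SPO, `0` otherwise. -/
noncomputable def pledge (g : ProperDelegationGame n) (p : Fin n → Action n)
    (j : Fin n) : ℝ :=
  if isSPO p j then g.s j else 0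

/-- The external stake delegated to pool `j`. -/
def extDeleg (p : Fin n → Action n) (j : Fin n) : ℝ := ∑ i, delegAmt p i j

/-- The total size of pool `j` (pledge plus external delegation). -/
noncomputable def poolSize (g : ProperDelegationGame n) (p : Fin n → Action n)
    (j : Fin n) : ℝ :=
  pledge g p j + extDeleg p j

/-- The capped separable pool reward function `ρ(λ,β) = a λ + b λ * min (τ−λ) β`. -/
noncomputable def rho (g : ProperDelegationGame n) (lam beta : ℝ) : ℝ :=
  g.a lam + g.b lam * min (g.tau - lam) beta

/-- The threat of deviation `α(x,c) = (a x − c)/x`. -/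
noncomputable def alpha (g : ProperDelegationGame n) (x c' : ℝ) : ℝ :=
  (g.a x - c') / x

/-- The per-unit delegation reward of the profile `p`: the maximum of
`α(s i, cmin)` over all delegators `i`, and `0` if there are no delegators. -/
noncomputable def rOf (g : ProperDelegationGame n) (p : Fin n → Action n) : ℝ :=
  if h : (Finset.univ.filter fun i => isDeleg p i).Nonempty then
    (Finset.univ.filter fun i => isDeleg p i).sup' h fun i => g.alpha (g.s i) g.cmin
  else 0

/-- Pool `j` is (active and) feasible: `j` is an SPO and `ρ(λ_j, β_j) ≥ r·σ_j`. -/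
def feasible (g : ProperDelegationGame n) (p : Fin n → Action n) (j : Fin n) : Prop :=
  isSPO p j ∧ rho g (pledge g p j) (extDeleg p j) ≥ rOf g p * poolSize g p j

/-- The reward player `i` receives from delegating to pool `j`: `r · d_i(j)` from an
active feasible pool, the proportional share from an active infeasible pool, `0`
from an inactive pool. -/
noncomputable def delegReward (g : ProperDelegationGame n) (p : Fin n → Action n)
    (i j : Fin n) : ℝ :=
  if isSPO p j then
    (if feasible g p j then rOf g p * delegAmt p i j
     else (delegAmt p i j / poolSize g p j) * rho g (pledge g p j) (extDeleg p j))
  else 0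

/-- The utility of player `i` under profile `p`: `ε_i` if idle, pool rewards minus the
operation cost `c_i` if an SPO, and total delegation rewards if a delegator. -/
noncomputable def utility (g : ProperDelegationGame n) (p : Fin n → Action n)
    (i : Fin n) : ℝ :=
  match p i with
  | .idle => g.eps i
  | .spo =>
      (if feasible g p i then
        rho g (g.s i) (extDeleg p i) - rOf g p * extDeleg p i
       else (g.s i / poolSize g p i) * rho g (g.s i) (extDeleg p i)) - g.c i
  | .deleg _ => ∑ j, delegReward g p i j

/-- The gap `G(λ,c,ε,r) = max (ε + c − a λ) (max (r − α(λ,cmin)) 0 · λ + (c − cmin))`. -/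
noncomputable def gap (g : ProperDelegationGame n) (lam c' eps' r : ℝ) : ℝ :=
  max (eps' + c' - g.a lam)
    (max (r - g.alpha lam g.cmin) 0 * lam + (c' - g.cmin))

/-- The pool deficit `β⁻(λ,c,ε,r)`, valued in `EReal` (it is `⊤` when no amount of
external delegation can keep the SPO content). -/
noncomputable def betaMinus (g : ProperDelegationGame n) (lam c' eps' r : ℝ) : EReal :=
  if (g.b lam - r) * (g.tau - lam) ≥ gap g lam c' eps' r then
    ((gap g lam c' eps' r / (g.b lam - r) : ℝ) : EReal)
  else ⊤

/-- The pool capacity `β⁺(λ,c,ε,r)`, valued in `EReal` (it is `⊥` when no amount of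
external delegation can keep the SPO content). -/
noncomputable def betaPlus (g : ProperDelegationGame n) (lam c' eps' r : ℝ) : EReal :=
  if (g.b lam - r) * (g.tau - lam) ≥ gap g lam c' eps' r then
    (((g.b lam * (g.tau - lam) - gap g lam c' eps' r) / r : ℝ) : EReal)
  else ⊥

/-- `p` is a pure Nash equilibrium: no player can strictly increase their utility by
unilaterally switching to another valid action. -/
def IsPNE (g : ProperDelegationGame n) (p : Fin n → Action n) : Prop :=
  ∀ i : Fin n, ∀ q : Action n, g.ValidAction i q →
    utility g (Function.update p i q) i ≤ utility g p i

end ProperDelegationGame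

namespace ProperDelegationGame

variable {n : ℕ}

/-- The set of players not designated as SPOs by `f` whose threat of deviation is at
least `ε_i / s_i` (the candidates for the pivotal delegate). -/
noncomputable def pivotalSet (g : ProperDelegationGame n)
    (f : ℝ → ℝ → ℝ → Bool) : Finset (Fin n) :=
  Finset.univ.filter fun i =>
    f (g.s i) (g.c i) (g.eps i) = false ∧
    g.eps i / g.s i ≤ g.alpha (g.s i) g.cmin

/-- The per-unit delegation reward `r = α(s*, cmin)` determined by the pivotal
delegation stake `s* = max {s_i : f(s_i,c_i,ε_i) = 0 and α(s_i,cmin) ≥ ε_i/s_i}`,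
with `r = 0` if this set is empty. -/
noncomputable def rStar (g : ProperDelegationGame n)
    (f : ℝ → ℝ → ℝ → Bool) : ℝ :=
  if h : (pivotalSet g f).Nonempty then
    g.alpha ((pivotalSet g f).sup' h g.s) g.cmin
  else 0

/-- The total ex post stable delegation
`Del(f) = Σ_{i : f(s_i,c_i,ε_i)=0 and r·s_i ≥ ε_i} s_i`. -/
noncomputable def Del (g : ProperDelegationGame n)
    (f : ℝ → ℝ → ℝ → Bool) : ℝ :=
  ∑ i ∈ Finset.univ.filter (fun i =>
      f (g.s i) (g.c i) (g.eps i) = false ∧ g.eps i ≤ rStar g f * g.s i), g.s i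

/-- The total ex post pool deficit
`Def(f) = Σ_{i : f(s_i,c_i,ε_i)=1} β⁻(s_i, c_i, ε_i, r)`. -/
noncomputable def Def (g : ProperDelegationGame n)
    (f : ℝ → ℝ → ℝ → Bool) : EReal :=
  ∑ i ∈ Finset.univ.filter (fun i => f (g.s i) (g.c i) (g.eps i) = true),
    betaMinus g (g.s i) (g.c i) (g.eps i) (rStar g f)

/-- The total ex post pool capacity
`Cap(f) = Σ_{i : f(s_i,c_i,ε_i)=1} β⁺(s_i, c_i, ε_i, r)`. -/
noncomputable def Cap (g : ProperDelegationGame n)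
    (f : ℝ → ℝ → ℝ → Bool) : EReal :=
  ∑ i ∈ Finset.univ.filter (fun i => f (g.s i) (g.c i) (g.eps i) = true),
    betaPlus g (g.s i) (g.c i) (g.eps i) (rStar g f)

end ProperDelegationGame

open ProperDelegationGame

/-!
Let every delegator split their stake over the pools in the same proportions `β_j / Del(f)`.
Pool `j` then holds external delegation exactly `β_j`, and `Def(f) ≤ Del(f) ≤ Cap(f)` lets the
`β_j` be chosen with `β⁻_j ≤ β_j ≤ β⁺_j`. By the shape of the gap, an operator in this range earns
at least `ε_j` and at least `max(r, α(s_j, cmin)) · s_j`.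

By monotonicity of `α`, the pivotal player has the largest threat of deviation among the
delegators, so `r` is the reward of the profile, and an idle player's threat is at most their
idle utility. Hence everybody already earns `ε_i` and `max(r, α(s_i, cmin)) · s_i`. No deviation
beats this: a player who switches to delegating raises the reward to at most
`max(r, α(s_i, cmin))`, and one who opens a new pool attracts no delegation.
-/

theorem exists_sum_eq_of_mem_Icc_sum {ι : Type*} {F : Finset ι} {lo hi : ι → ℝ} {D : ℝ}
    (hle : ∀ j ∈ F, lo j ≤ hi j) (hD : D ∈ Set.Icc (∑ j ∈ F, lo j) (∑ j ∈ F, hi j)) :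
    ∃ x : ι → ℝ, (∀ j ∈ F, x j ∈ Set.Icc (lo j) (hi j)) ∧ ∑ j ∈ F, x j = D := by
  have hbox : IsPreconnected ((F : Set ι).pi fun j => Set.Icc (lo j) (hi j)) :=
    (convex_pi fun j _ => convex_Icc (lo j) (hi j)).isPreconnected
  obtain ⟨x, hx, hsum⟩ := hbox.intermediate_value
    (fun j hj => Set.left_mem_Icc.2 (hle j hj)) (fun j hj => Set.right_mem_Icc.2 (hle j hj))
    (f := fun x => ∑ j ∈ F, x j) (by fun_prop) hD
  exact ⟨x, hx, hsum⟩

theorem ereal_coe_sum {ι : Type*} (F : Finset ι) (x : ι → ℝ) :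
    ((∑ j ∈ F, x j : ℝ) : EReal) = ∑ j ∈ F, (x j : EReal) :=
  map_sum (⟨⟨Real.toEReal, EReal.coe_zero⟩, EReal.coe_add⟩ : ℝ →+ EReal) x F

namespace ProperDelegationGame

variable {n : ℕ} {g : ProperDelegationGame n}

section PoolBounds

variable {lam c' eps' r β : ℝ}

theorem gap_nonneg (hlam : 0 ≤ lam) (hc : g.cmin ≤ c') : 0 ≤ g.gap lam c' eps' r :=
  le_max_of_le_right <| add_nonneg (mul_nonneg (le_max_right _ _) hlam) (sub_nonneg.2 hc)

theorem le_add_gap_sub : eps' ≤ g.a lam + g.gap lam c' eps' r - c' := by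
  have : eps' + c' - g.a lam ≤ g.gap lam c' eps' r := le_max_left _ _
  linarith

theorem alpha_mul_self (hlam : 0 < lam) : g.alpha lam c' * lam = g.a lam - c' :=
  div_mul_cancel₀ _ hlam.ne'

theorem max_alpha_mul_le_add_gap_sub (hlam : 0 < lam) :
    max r (g.alpha lam g.cmin) * lam ≤ g.a lam + g.gap lam c' eps' r - c' := by
  have hgap : max (r - g.alpha lam g.cmin) 0 * lam + (c' - g.cmin) ≤ g.gap lam c' eps' r :=
    le_max_right _ _
  calc max r (g.alpha lam g.cmin) * lam
      = max (r - g.alpha lam g.cmin) 0 * lam + g.alpha lam g.cmin * lam := by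
        rw [← add_mul, ← max_add_add_right, sub_add_cancel, zero_add]
    _ = max (r - g.alpha lam g.cmin) 0 * lam + (g.a lam - g.cmin) := by rw [alpha_mul_self hlam]
    _ ≤ g.a lam + g.gap lam c' eps' r - c' := by linarith

theorem le_b_of_gap_le (hlam : 0 ≤ lam) (htau : lam < g.tau) (hc : g.cmin ≤ c')
    (h : g.gap lam c' eps' r ≤ (g.b lam - r) * (g.tau - lam)) : r ≤ g.b lam :=
  sub_nonneg.1 <| nonneg_of_mul_nonneg_left ((gap_nonneg hlam hc).trans h) (sub_pos.2 htau)

theorem betaMinus_le_coe_iff : g.betaMinus lam c' eps' r ≤ (β : EReal) ↔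
    g.gap lam c' eps' r ≤ (g.b lam - r) * (g.tau - lam) ∧
      g.gap lam c' eps' r / (g.b lam - r) ≤ β := by
  unfold betaMinus
  split_ifs with h
  · simpa only [EReal.coe_le_coe_iff, iff_and_self] using fun _ => h
  · simp only [top_le_iff, EReal.coe_ne_top, false_iff, not_and]
    exact fun h' => absurd h' h

theorem coe_le_betaPlus_iff : (β : EReal) ≤ g.betaPlus lam c' eps' r ↔
    g.gap lam c' eps' r ≤ (g.b lam - r) * (g.tau - lam) ∧
      β ≤ (g.b lam * (g.tau - lam) - g.gap lam c' eps' r) / r := by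
  unfold betaPlus
  split_ifs with h
  · simpa only [EReal.coe_le_coe_iff, iff_and_self] using fun _ => h
  · simp only [le_bot_iff, EReal.coe_ne_bot, false_iff, not_and]
    exact fun h' => absurd h' h

theorem betaMinus_eq_coe (h : g.gap lam c' eps' r ≤ (g.b lam - r) * (g.tau - lam)) :
    g.betaMinus lam c' eps' r = ((g.gap lam c' eps' r / (g.b lam - r) : ℝ) : EReal) :=
  if_pos h

theorem betaPlus_eq_coe (h : g.gap lam c' eps' r ≤ (g.b lam - r) * (g.tau - lam)) :
    g.betaPlus lam c' eps' r =
      (((g.b lam * (g.tau - lam) - g.gap lam c' eps' r) / r : ℝ) : EReal) :=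
  if_pos h

theorem betaMinus_nonneg (hlam : 0 ≤ lam) (htau : lam < g.tau) (hc : g.cmin ≤ c') :
    0 ≤ g.betaMinus lam c' eps' r := by
  unfold betaMinus
  split_ifs with h
  · exact EReal.coe_nonneg.2 <|
      div_nonneg (gap_nonneg hlam hc) (sub_nonneg.2 (le_b_of_gap_le hlam htau hc h))
  · exact le_top

theorem gap_div_le_sub_gap_div (hlam : 0 ≤ lam) (htau : lam < g.tau) (hc : g.cmin ≤ c')
    (hr : 0 < r) (h : g.gap lam c' eps' r ≤ (g.b lam - r) * (g.tau - lam)) :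
    g.gap lam c' eps' r / (g.b lam - r) ≤
      (g.b lam * (g.tau - lam) - g.gap lam c' eps' r) / r :=
  calc g.gap lam c' eps' r / (g.b lam - r)
      ≤ g.tau - lam := div_le_of_le_mul₀ (sub_nonneg.2 (le_b_of_gap_le hlam htau hc h))
        (sub_pos.2 htau).le (by linarith)
    _ ≤ (g.b lam * (g.tau - lam) - g.gap lam c' eps' r) / r := by
      rw [le_div_iff₀ hr]; linarith

theorem add_gap_le_rho_sub (hlam : 0 ≤ lam) (htau : lam < g.tau) (hc : g.cmin ≤ c') (hr : 0 < r)
    (hlo : g.betaMinus lam c' eps' r ≤ β) (hhi : (β : EReal) ≤ g.betaPlus lam c' eps' r) :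
    g.a lam + g.gap lam c' eps' r ≤ g.rho lam β - r * β := by
  obtain ⟨hgap, hdef⟩ := betaMinus_le_coe_iff.1 hlo
  have hcap := (le_div_iff₀ hr).1 (coe_le_betaPlus_iff.1 hhi).2
  have hb := le_b_of_gap_le hlam htau hc hgap
  have hgapβ : g.gap lam c' eps' r ≤ (g.b lam - r) * β := by
    rcases hb.eq_or_lt with hb | hb
    · simpa only [← hb, sub_self, zero_mul] using hgap
    · exact (div_le_iff₀' (sub_pos.2 hb)).1 hdef
  have hmin : g.gap lam c' eps' r + r * β ≤ g.b lam * min (g.tau - lam) β := by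
    rw [mul_min_of_nonneg _ _ (g.b_nonneg lam hlam)]
    exact le_min (by linarith) (by linarith)
  unfold rho
  linarith

theorem exists_sum_eq_of_betaMinus_le_of_le_betaPlus {F : Finset (Fin n)} {D : ℝ} (hr : 0 < r)
    (hlo : ∑ j ∈ F, g.betaMinus (g.s j) (g.c j) (g.eps j) r ≤ D)
    (hhi : (D : EReal) ≤ ∑ j ∈ F, g.betaPlus (g.s j) (g.c j) (g.eps j) r) :
    ∃ β : Fin n → ℝ, (∀ j ∈ F, g.betaMinus (g.s j) (g.c j) (g.eps j) r ≤ β j ∧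
      (β j : EReal) ≤ g.betaPlus (g.s j) (g.c j) (g.eps j) r) ∧ ∑ j ∈ F, β j = D := by
  have hgap : ∀ j ∈ F, g.gap (g.s j) (g.c j) (g.eps j) r ≤
      (g.b (g.s j) - r) * (g.tau - g.s j) := fun j hj =>
    (betaMinus_le_coe_iff.1 <| (Finset.single_le_sum (fun i _ =>
      betaMinus_nonneg (g.s_pos i).le (g.tau_gt i) (g.cmin_le i)) hj).trans hlo).1
  rw [Finset.sum_congr rfl fun j hj => betaMinus_eq_coe (hgap j hj), ← ereal_coe_sum,
    EReal.coe_le_coe_iff] at hlo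
  rw [Finset.sum_congr rfl fun j hj => betaPlus_eq_coe (hgap j hj), ← ereal_coe_sum,
    EReal.coe_le_coe_iff] at hhi
  obtain ⟨β, hβ, hsum⟩ := exists_sum_eq_of_mem_Icc_sum (fun j hj => gap_div_le_sub_gap_div
    (g.s_pos j).le (g.tau_gt j) (g.cmin_le j) hr (hgap j hj)) ⟨hlo, hhi⟩
  exact ⟨β, fun j hj => ⟨betaMinus_le_coe_iff.2 ⟨hgap j hj, (hβ j hj).1⟩,
    coe_le_betaPlus_iff.2 ⟨hgap j hj, (hβ j hj).2⟩⟩, hsum⟩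

end PoolBounds

section Profiles

variable {p : Fin n → Action n} {q : Action n} {d : Fin n → ℝ} {i j : Fin n}

theorem delegAmt_eq_of_deleg (h : p i = .deleg d) : delegAmt p i j = d j := by
  simp only [delegAmt, h]

theorem delegAmt_eq_zero_of_not_isDeleg (h : ¬ isDeleg p i) : delegAmt p i j = 0 := by
  unfold delegAmt
  split
  · exact absurd ⟨_, ‹_›⟩ h
  · rfl

theorem delegAmt_nonneg (hp : g.ValidAction i (p i)) : 0 ≤ delegAmt p i j := by
  by_cases h : isDeleg p i
  · obtain ⟨d, hd⟩ := h
    rw [delegAmt_eq_of_deleg hd]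
    rw [hd] at hp
    exact hp.2.1 j
  · exact (delegAmt_eq_zero_of_not_isDeleg h).ge

theorem delegAmt_self (hp : g.ValidAction i (p i)) : delegAmt p i i = 0 := by
  by_cases h : isDeleg p i
  · obtain ⟨d, hd⟩ := h
    rw [delegAmt_eq_of_deleg hd]
    rw [hd] at hp
    exact hp.1
  · exact delegAmt_eq_zero_of_not_isDeleg h

theorem extDeleg_nonneg (hp : g.ValidProfile p) : 0 ≤ extDeleg p j :=
  Finset.sum_nonneg fun i _ => delegAmt_nonneg (hp i)

theorem ValidProfile.update (hp : g.ValidProfile p) (hq : g.ValidAction i q) :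
    g.ValidProfile (Function.update p i q) :=
  (Function.forall_update_iff p fun k x => g.ValidAction k x).2 ⟨hq, fun k _ => hp k⟩

theorem extDeleg_update_self (hp : g.ValidAction i (p i)) (hq : g.ValidAction i q) :
    extDeleg (Function.update p i q) i = extDeleg p i := by
  refine Finset.sum_congr rfl fun k _ => ?_
  rcases eq_or_ne k i with rfl | hk
  · rw [delegAmt_self hp, delegAmt_self (by rwa [Function.update_self])]
  · simp only [delegAmt, Function.update_of_ne hk]

theorem rOf_le {R : ℝ} (hR : 0 ≤ R) (h : ∀ i, isDeleg p i → g.alpha (g.s i) g.cmin ≤ R) :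
    g.rOf p ≤ R := by
  unfold rOf
  split_ifs
  · exact Finset.sup'_le _ _ fun i hi => h i (Finset.mem_filter.1 hi).2
  · exact hR

theorem rOf_eq_zero (h : ∀ i, ¬ isDeleg p i) : g.rOf p = 0 :=
  dif_neg fun ⟨i, hi⟩ => h i (Finset.mem_filter.1 hi).2

theorem alpha_le_rOf (h : isDeleg p i) : g.alpha (g.s i) g.cmin ≤ g.rOf p := by
  have hi : i ∈ Finset.univ.filter fun k => isDeleg p k :=
    Finset.mem_filter.2 ⟨Finset.mem_univ i, h⟩
  unfold rOf
  rw [dif_pos ⟨i, hi⟩]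
  exact Finset.le_sup' (fun k => g.alpha (g.s k) g.cmin) hi

theorem rOf_update_le (hr : 0 ≤ g.rOf p) :
    g.rOf (Function.update p i q) ≤ max (g.rOf p) (g.alpha (g.s i) g.cmin) := by
  refine rOf_le (hr.trans (le_max_left _ _)) fun k ⟨d, hd⟩ => ?_
  rcases eq_or_ne k i with rfl | hk
  · exact le_max_right _ _
  · rw [Function.update_of_ne hk] at hd
    exact (alpha_le_rOf ⟨d, hd⟩).trans (le_max_left _ _)

theorem pledge_of_isSPO (h : isSPO p j) : g.pledge p j = g.s j := if_pos h

theorem poolSize_of_isSPO (h : isSPO p j) : g.poolSize p j = g.s j + extDeleg p j := by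
  rw [poolSize, pledge_of_isSPO h]

theorem utility_of_idle (h : p i = .idle) : g.utility p i = g.eps i := by
  simp only [utility, h]

theorem utility_of_feasible (h : g.feasible p i) :
    g.utility p i = g.rho (g.s i) (extDeleg p i) - g.rOf p * extDeleg p i - g.c i := by
  simp only [utility, show p i = .spo from h.1, if_pos h]

theorem utility_of_extDeleg_eq_zero (hspo : isSPO p i) (hext : extDeleg p i = 0) :
    g.utility p i = g.a (g.s i) - g.c i := by
  have hrho : g.rho (g.s i) 0 = g.a (g.s i) := by
    rw [rho, min_eq_right (sub_pos.2 (g.tau_gt i)).le, mul_zero, add_zero]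
  simp only [utility, show p i = .spo from hspo, poolSize_of_isSPO hspo, hext, hrho, mul_zero,
    sub_zero, add_zero, div_self (g.s_pos i).ne', one_mul, ite_self]

theorem utility_of_deleg (h : p i = .deleg d) : g.utility p i = ∑ j, g.delegReward p i j := by
  simp only [utility, h]

/-- An infeasible pool pays each delegator a proportional share of a reward below `r · σ_j`, so no
pool ever pays more than `r` per unit of stake. -/
theorem delegReward_le {R : ℝ} (hp : g.ValidProfile p) (hR : 0 ≤ R) (hr : g.rOf p ≤ R) :
    g.delegReward p i j ≤ R * delegAmt p i j := by
  have hd : 0 ≤ delegAmt p i j := delegAmt_nonneg (hp i)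
  unfold delegReward
  split_ifs with hspo hfeas
  · exact mul_le_mul_of_nonneg_right hr hd
  · have hsize : 0 < g.poolSize p j := by
      rw [poolSize_of_isSPO hspo]
      exact add_pos_of_pos_of_nonneg (g.s_pos j) (extDeleg_nonneg hp)
    have hrho : g.rho (g.pledge p j) (extDeleg p j) ≤ R * g.poolSize p j :=
      (not_le.1 fun h => hfeas ⟨hspo, h⟩).le.trans (mul_le_mul_of_nonneg_right hr hsize.le)
    calc delegAmt p i j / g.poolSize p j * g.rho (g.pledge p j) (extDeleg p j)
        ≤ delegAmt p i j / g.poolSize p j * (R * g.poolSize p j) :=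
          mul_le_mul_of_nonneg_left hrho (div_nonneg hd hsize.le)
      _ = R * delegAmt p i j := by field_simp
  · exact mul_nonneg hR hd

theorem utility_le_of_isDeleg {R : ℝ} (hp : g.ValidProfile p) (hR : 0 ≤ R) (hr : g.rOf p ≤ R)
    (hi : isDeleg p i) : g.utility p i ≤ R * g.s i := by
  obtain ⟨d, hd⟩ := hi
  have hvalid := hp i
  rw [hd] at hvalid
  rw [utility_of_deleg hd, ← hvalid.2.2, Finset.mul_sum]
  refine Finset.sum_le_sum fun j _ => ?_
  rw [← delegAmt_eq_of_deleg hd]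
  exact delegReward_le hp hR hr

theorem utility_of_deleg_of_feasible (hp : g.ValidProfile p) (hi : p i = .deleg d)
    (hfeas : ∀ j, 0 < d j → g.feasible p j) : g.utility p i = g.rOf p * g.s i := by
  have hvalid := hp i
  rw [hi] at hvalid
  rw [utility_of_deleg hi, ← hvalid.2.2, Finset.mul_sum]
  refine Finset.sum_congr rfl fun j _ => ?_
  rcases (hvalid.2.1 j).eq_or_lt with hj | hj
  · simp only [delegReward, delegAmt_eq_of_deleg hi, ← hj, mul_zero, zero_div, zero_mul, ite_self]
  · rw [delegReward, if_pos (hfeas j hj).1, if_pos (hfeas j hj), delegAmt_eq_of_deleg hi]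

/-- A player leaving for the delegators can raise the per-unit reward only to their own threat of
deviation, and one who opens a pool nobody delegates to earns at most that threat per unit. -/
theorem isPNE_of_threats_le_utility (hp : g.ValidProfile p) (hr : 0 ≤ g.rOf p)
    (hext : ∀ i, ¬ isSPO p i → extDeleg p i = 0) (hidle : ∀ i, g.eps i ≤ g.utility p i)
    (hthreat : ∀ i, max (g.rOf p) (g.alpha (g.s i) g.cmin) * g.s i ≤ g.utility p i) :
    g.IsPNE p := by
  intro i q hq
  cases hcase : q with
  | idle => exact (utility_of_idle (Function.update_self ..)).trans_le (hidle i)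
  | spo =>
    subst hcase
    by_cases hi : isSPO p i
    · rw [← show p i = .spo from hi, Function.update_eq_self]
    · calc g.utility (Function.update p i .spo) i
          = g.a (g.s i) - g.c i := utility_of_extDeleg_eq_zero (Function.update_self ..)
            ((extDeleg_update_self (hp i) hq).trans (hext i hi))
        _ ≤ g.alpha (g.s i) g.cmin * g.s i := by
            rw [alpha_mul_self (g.s_pos i)]
            exact sub_le_sub_left (g.cmin_le i) _
        _ ≤ max (g.rOf p) (g.alpha (g.s i) g.cmin) * g.s i :=
            mul_le_mul_of_nonneg_right (le_max_right _ _) (g.s_pos i).le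
        _ ≤ g.utility p i := hthreat i
  | deleg d =>
    subst hcase
    exact (utility_le_of_isDeleg (hp.update hq) (hr.trans (le_max_left _ _)) (rOf_update_le hr)
      ⟨d, Function.update_self ..⟩).trans (hthreat i)

end Profiles

section Pivot

variable {f : ℝ → ℝ → ℝ → Bool} {i j : Fin n}

/-- The players that the partial ex ante strategy `f` makes stake pool operators. -/
noncomputable def spoSet (g : ProperDelegationGame n) (f : ℝ → ℝ → ℝ → Bool) : Finset (Fin n) :=
  Finset.univ.filter fun i => f (g.s i) (g.c i) (g.eps i) = true

/-- The players outside the pools of `f` for whom delegating at the pivotal reward `rStar g f` is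
at least as good as being idle; `Del g f` is their total stake. -/
noncomputable def delegatorSet (g : ProperDelegationGame n) (f : ℝ → ℝ → ℝ → Bool) :
    Finset (Fin n) :=
  Finset.univ.filter fun i =>
    f (g.s i) (g.c i) (g.eps i) = false ∧ g.eps i ≤ rStar g f * g.s i

theorem mem_spoSet : i ∈ spoSet g f ↔ f (g.s i) (g.c i) (g.eps i) = true := by
  simp only [spoSet, Finset.mem_filter, Finset.mem_univ, true_and]

theorem mem_delegatorSet : i ∈ delegatorSet g f ↔
    f (g.s i) (g.c i) (g.eps i) = false ∧ g.eps i ≤ rStar g f * g.s i := by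
  simp only [delegatorSet, Finset.mem_filter, Finset.mem_univ, true_and]

theorem mem_pivotalSet : i ∈ pivotalSet g f ↔ f (g.s i) (g.c i) (g.eps i) = false ∧
    g.eps i ≤ g.alpha (g.s i) g.cmin * g.s i := by
  simp only [pivotalSet, Finset.mem_filter, Finset.mem_univ, true_and, div_le_iff₀ (g.s_pos i)]

theorem notMem_spoSet_of_mem_delegatorSet (hi : i ∈ delegatorSet g f) : i ∉ spoSet g f := by
  rw [mem_spoSet, (mem_delegatorSet.1 hi).1]
  exact Bool.false_ne_true

theorem eq_false_of_notMem_spoSet (hi : i ∉ spoSet g f) : f (g.s i) (g.c i) (g.eps i) = false :=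
  Bool.eq_false_of_not_eq_true fun h => hi (mem_spoSet.2 h)

theorem rStar_mul_lt_eps (hspo : i ∉ spoSet g f) (hdel : i ∉ delegatorSet g f) :
    rStar g f * g.s i < g.eps i :=
  not_le.1 fun h => hdel (mem_delegatorSet.2 ⟨eq_false_of_notMem_spoSet hspo, h⟩)

theorem rStar_pos_of_mem_delegatorSet (hi : i ∈ delegatorSet g f) : 0 < rStar g f :=
  pos_of_mul_pos_left ((g.eps_pos i).trans_le (mem_delegatorSet.1 hi).2) (g.s_pos i).le

theorem rStar_pos_of_del_pos (hDel : 0 < Del g f) : 0 < rStar g f := by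
  obtain ⟨i, hi, -⟩ := Finset.exists_ne_zero_of_sum_ne_zero hDel.ne'
  exact rStar_pos_of_mem_delegatorSet hi

theorem alpha_le_alpha_of_stake_le (h : g.s i ≤ g.s j) :
    g.alpha (g.s i) g.cmin ≤ g.alpha (g.s j) g.cmin :=
  g.alpha_mono _ _ (g.s_pos i) h ⟨j, le_rfl⟩

theorem exists_mem_pivotalSet_alpha_eq_rStar (hne : (pivotalSet g f).Nonempty) :
    ∃ k ∈ pivotalSet g f, g.alpha (g.s k) g.cmin = rStar g f ∧
      ∀ i ∈ pivotalSet g f, g.s i ≤ g.s k := by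
  obtain ⟨k, hk, hsk⟩ := Finset.exists_mem_eq_sup' hne g.s
  refine ⟨k, hk, ?_, fun i hi => hsk ▸ Finset.le_sup' g.s hi⟩
  rw [rStar, dif_pos hne, hsk]

theorem alpha_le_rStar_of_mem_pivotalSet (hi : i ∈ pivotalSet g f) :
    g.alpha (g.s i) g.cmin ≤ rStar g f := by
  obtain ⟨k, -, hαk, hmax⟩ := exists_mem_pivotalSet_alpha_eq_rStar ⟨i, hi⟩
  exact (alpha_le_alpha_of_stake_le (hmax i hi)).trans_eq hαk

theorem rStar_nonneg : 0 ≤ rStar g f := by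
  by_cases hne : (pivotalSet g f).Nonempty
  · obtain ⟨i, hi⟩ := hne
    have hα : 0 < g.alpha (g.s i) g.cmin :=
      pos_of_mul_pos_left ((g.eps_pos i).trans_le (mem_pivotalSet.1 hi).2) (g.s_pos i).le
    exact hα.le.trans (alpha_le_rStar_of_mem_pivotalSet hi)
  · exact (show rStar g f = 0 from dif_neg hne).ge

theorem exists_mem_delegatorSet_alpha_eq_rStar (hr : rStar g f ≠ 0) :
    ∃ k ∈ delegatorSet g f, g.alpha (g.s k) g.cmin = rStar g f := by
  have hne : (pivotalSet g f).Nonempty := by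
    by_contra h
    exact hr (dif_neg h)
  obtain ⟨k, hk, hαk, -⟩ := exists_mem_pivotalSet_alpha_eq_rStar hne
  exact ⟨k, mem_delegatorSet.2 (hαk ▸ mem_pivotalSet.1 hk), hαk⟩

theorem alpha_le_rStar_of_mem_delegatorSet (hi : i ∈ delegatorSet g f) :
    g.alpha (g.s i) g.cmin ≤ rStar g f := by
  obtain ⟨hfi, hepsi⟩ := mem_delegatorSet.1 hi
  by_contra! hlt
  -- A threat of deviation above `rStar g f` would make `i` itself pivotal.
  have hpiv : i ∈ pivotalSet g f :=
    mem_pivotalSet.2 ⟨hfi, hepsi.trans (mul_le_mul_of_nonneg_right hlt.le (g.s_pos i).le)⟩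
  exact hlt.not_ge (alpha_le_rStar_of_mem_pivotalSet hpiv)

theorem alpha_mul_le_eps (hspo : i ∉ spoSet g f) (hdel : i ∉ delegatorSet g f) :
    g.alpha (g.s i) g.cmin * g.s i ≤ g.eps i := by
  by_contra! hlt
  have hpiv : i ∈ pivotalSet g f :=
    mem_pivotalSet.2 ⟨eq_false_of_notMem_spoSet hspo, hlt.le⟩
  exact (rStar_mul_lt_eps hspo hdel).not_gt <| hlt.trans_le <|
    mul_le_mul_of_nonneg_right (alpha_le_rStar_of_mem_pivotalSet hpiv) (g.s_pos i).le

end Pivot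

section ProportionalProfile

variable {f : ℝ → ℝ → ℝ → Bool} {w : Fin n → ℝ} {i j : Fin n}

/-- The profile in which the players in `spoSet g f` operate pools, those in `delegatorSet g f`
all split their stake over the pools in the same proportions `w`, and the others are idle. -/
noncomputable def proportionalProfile (g : ProperDelegationGame n) (f : ℝ → ℝ → ℝ → Bool)
    (w : Fin n → ℝ) : Fin n → Action n := fun i =>
  if i ∈ spoSet g f then .spo
  else if i ∈ delegatorSet g f then .deleg fun j => g.s i * w j
  else .idle

/-- Proportions `w` over the pools of `f` under which every pool `j` is content: with external
delegation `Del g f * w j`, its operator keeps at least `a (s j)` plus the gap (before costs) after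
paying its delegators `rStar g f` per unit. -/
structure IsContentSplit (g : ProperDelegationGame n) (f : ℝ → ℝ → ℝ → Bool)
    (w : Fin n → ℝ) : Prop where
  mem_stdSimplex : w ∈ stdSimplex ℝ (Fin n)
  eq_zero_of_notMem : ∀ j ∉ spoSet g f, w j = 0
  content : ∀ j ∈ spoSet g f,
    g.a (g.s j) + g.gap (g.s j) (g.c j) (g.eps j) (rStar g f) ≤
      g.rho (g.s j) (Del g f * w j) - rStar g f * (Del g f * w j)

theorem exists_isContentSplit (hDel : 0 < Del g f) (hDefDel : Def g f ≤ (Del g f : EReal))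
    (hDelCap : (Del g f : EReal) ≤ Cap g f) : ∃ w, IsContentSplit g f w := by
  have hr := rStar_pos_of_del_pos hDel
  obtain ⟨β, hβ, hsum⟩ := exists_sum_eq_of_betaMinus_le_of_le_betaPlus hr hDefDel hDelCap
  have hβ_nonneg : ∀ j ∈ spoSet g f, 0 ≤ β j := fun j hj => EReal.coe_nonneg.1 <|
    (betaMinus_nonneg (g.s_pos j).le (g.tau_gt j) (g.cmin_le j)).trans (hβ j hj).1
  refine ⟨fun j => if j ∈ spoSet g f then β j / Del g f else 0, ⟨fun j => ?_, ?_⟩,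
    fun j hj => if_neg hj, fun j hj => ?_⟩
  · dsimp only
    split_ifs with hj
    · exact div_nonneg (hβ_nonneg j hj) hDel.le
    · exact le_rfl
  · rw [Finset.sum_ite_mem, Finset.univ_inter, ← Finset.sum_div, div_eq_one_iff_eq hDel.ne']
    exact hsum
  · rw [if_pos hj, mul_div_cancel₀ _ hDel.ne']
    exact add_gap_le_rho_sub (g.s_pos j).le (g.tau_gt j) (g.cmin_le j) hr (hβ j hj).1 (hβ j hj).2

theorem proportionalProfile_of_mem_delegatorSet (hi : i ∈ delegatorSet g f) :
    proportionalProfile g f w i = .deleg fun j => g.s i * w j := by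
  rw [proportionalProfile, if_neg (notMem_spoSet_of_mem_delegatorSet hi), if_pos hi]

theorem proportionalProfile_of_notMem (hspo : i ∉ spoSet g f) (hdel : i ∉ delegatorSet g f) :
    proportionalProfile g f w i = .idle := by
  rw [proportionalProfile, if_neg hspo, if_neg hdel]

theorem isSPO_proportionalProfile_iff : isSPO (proportionalProfile g f w) i ↔ i ∈ spoSet g f := by
  unfold isSPO proportionalProfile
  split_ifs with hspo <;> simp only [hspo]

theorem isDeleg_proportionalProfile_iff :
    isDeleg (proportionalProfile g f w) i ↔ i ∈ delegatorSet g f := by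
  refine ⟨fun ⟨d, hd⟩ => ?_, fun hi => ⟨_, proportionalProfile_of_mem_delegatorSet hi⟩⟩
  unfold proportionalProfile at hd
  split_ifs at hd with hspo hdel
  exact hdel

theorem rOf_proportionalProfile : g.rOf (proportionalProfile g f w) = rStar g f := by
  rcases eq_or_ne (rStar g f) 0 with h0 | hr
  · refine (rOf_eq_zero fun i hi => ?_).trans h0.symm
    exact (rStar_pos_of_mem_delegatorSet (isDeleg_proportionalProfile_iff.1 hi)).ne' h0
  · obtain ⟨k, hk, hαk⟩ := exists_mem_delegatorSet_alpha_eq_rStar hr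
    refine le_antisymm (rOf_le rStar_nonneg fun i hi => ?_) (hαk ▸ alpha_le_rOf ?_)
    · exact alpha_le_rStar_of_mem_delegatorSet (isDeleg_proportionalProfile_iff.1 hi)
    · exact isDeleg_proportionalProfile_iff.2 hk

theorem extDeleg_proportionalProfile :
    extDeleg (proportionalProfile g f w) j = Del g f * w j := by
  have hdel : ∀ i, delegAmt (proportionalProfile g f w) i j =
      if i ∈ delegatorSet g f then g.s i * w j else 0 := by
    intro i
    split_ifs with hi
    · exact delegAmt_eq_of_deleg (proportionalProfile_of_mem_delegatorSet hi)
    · exact delegAmt_eq_zero_of_not_isDeleg fun h => hi (isDeleg_proportionalProfile_iff.1 h)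
  rw [extDeleg, Finset.sum_congr rfl fun i _ => hdel i, Finset.sum_ite_mem, Finset.univ_inter,
    ← Finset.sum_mul]
  rfl

namespace IsContentSplit

theorem validProfile (hw : IsContentSplit g f w) :
    g.ValidProfile (proportionalProfile g f w) := by
  intro i
  unfold proportionalProfile
  split_ifs with hspo hdel
  · trivial
  · refine ⟨?_, fun j => mul_nonneg (g.s_pos i).le (hw.mem_stdSimplex.1 j), ?_⟩
    · exact mul_eq_zero_of_right _ (hw.eq_zero_of_notMem i hspo)
    · rw [← Finset.mul_sum, hw.mem_stdSimplex.2, mul_one]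
  · trivial

theorem feasible (hw : IsContentSplit g f w) (hj : j ∈ spoSet g f) :
    g.feasible (proportionalProfile g f w) j := by
  have hspo : isSPO (proportionalProfile g f w) j := isSPO_proportionalProfile_iff.2 hj
  refine ⟨hspo, ?_⟩
  rw [pledge_of_isSPO hspo, poolSize_of_isSPO hspo, extDeleg_proportionalProfile,
    rOf_proportionalProfile]
  have hpledge : rStar g f * g.s j ≤
      g.a (g.s j) + g.gap (g.s j) (g.c j) (g.eps j) (rStar g f) - g.c j :=
    (mul_le_mul_of_nonneg_right (le_max_left _ _) (g.s_pos j).le).trans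
      (max_alpha_mul_le_add_gap_sub (g.s_pos j))
  linarith [hw.content j hj, g.cmin_nonneg, g.cmin_le j]

theorem feasible_of_deleg (hw : IsContentSplit g f w) {d : Fin n → ℝ}
    (hd : proportionalProfile g f w i = .deleg d) (hj : 0 < d j) :
    g.feasible (proportionalProfile g f w) j := by
  have hi : i ∈ delegatorSet g f := isDeleg_proportionalProfile_iff.1 ⟨d, hd⟩
  obtain rfl : (fun j => g.s i * w j) = d :=
    Action.deleg.inj ((proportionalProfile_of_mem_delegatorSet hi).symm.trans hd)
  refine hw.feasible (by_contra fun hspo => hj.ne' ?_)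
  exact mul_eq_zero_of_right _ (hw.eq_zero_of_notMem j hspo)

theorem add_gap_sub_le_utility (hw : IsContentSplit g f w)
    (hi : i ∈ spoSet g f) :
    g.a (g.s i) + g.gap (g.s i) (g.c i) (g.eps i) (rStar g f) - g.c i ≤
      g.utility (proportionalProfile g f w) i := by
  rw [utility_of_feasible (hw.feasible hi), extDeleg_proportionalProfile,
    rOf_proportionalProfile]
  exact sub_le_sub_right (hw.content i hi) _

theorem utility_of_mem_delegatorSet (hw : IsContentSplit g f w)
    (hi : i ∈ delegatorSet g f) :
    g.utility (proportionalProfile g f w) i = rStar g f * g.s i := by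
  have hd := proportionalProfile_of_mem_delegatorSet (w := w) hi
  rw [utility_of_deleg_of_feasible hw.validProfile hd fun j => hw.feasible_of_deleg hd,
    rOf_proportionalProfile]

theorem eps_le_utility (hw : IsContentSplit g f w) (i : Fin n) :
    g.eps i ≤ g.utility (proportionalProfile g f w) i := by
  by_cases hspo : i ∈ spoSet g f
  · exact le_add_gap_sub.trans (hw.add_gap_sub_le_utility hspo)
  by_cases hdel : i ∈ delegatorSet g f
  · exact (mem_delegatorSet.1 hdel).2.trans_eq (hw.utility_of_mem_delegatorSet hdel).symm
  · exact (utility_of_idle (proportionalProfile_of_notMem hspo hdel)).ge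

theorem max_alpha_mul_le_utility (hw : IsContentSplit g f w) (i : Fin n) :
    max (rStar g f) (g.alpha (g.s i) g.cmin) * g.s i ≤
      g.utility (proportionalProfile g f w) i := by
  by_cases hspo : i ∈ spoSet g f
  · exact (max_alpha_mul_le_add_gap_sub (g.s_pos i)).trans (hw.add_gap_sub_le_utility hspo)
  by_cases hdel : i ∈ delegatorSet g f
  · rw [hw.utility_of_mem_delegatorSet hdel,
      max_eq_left (alpha_le_rStar_of_mem_delegatorSet hdel)]
  · rw [utility_of_idle (proportionalProfile_of_notMem hspo hdel),
      max_mul_of_nonneg _ _ (g.s_pos i).le]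
    exact max_le (rStar_mul_lt_eps hspo hdel).le (alpha_mul_le_eps hspo hdel)

theorem isPNE (hw : IsContentSplit g f w) :
    g.IsPNE (proportionalProfile g f w) := by
  have hrOf : g.rOf (proportionalProfile g f w) = rStar g f := rOf_proportionalProfile
  refine isPNE_of_threats_le_utility hw.validProfile (hrOf ▸ rStar_nonneg) (fun i hi => ?_)
    hw.eps_le_utility (hrOf ▸ hw.max_alpha_mul_le_utility)
  rw [extDeleg_proportionalProfile,
    hw.eq_zero_of_notMem i fun h => hi (isSPO_proportionalProfile_iff.2 h), mul_zero]

end IsContentSplit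

end ProportionalProfile

end ProperDelegationGame

/-- **Sufficient condition for ex post SPO stability.**
Let `f : ℝ³ → {0,1}` be a partial ex ante strategy for a proper delegation game with
stakes `s_i > 0`, costs `c_i ∈ [cmin, cmax]` with `cmin ≥ 0`, and idle utilities
`ε_i > 0`.  If `0 < Def(f) ≤ Del(f) ≤ Cap(f)`, then `f` is ex post SPO stable for this
draw of types: there exists a joint strategy profile `p` consistent with `f` (player
`i` is an SPO exactly when `f(s_i,c_i,ε_i) = 1`) which is a pure Nash equilibrium.
Moreover `p` can be chosen so that a player `i` with `f(s_i,c_i,ε_i) = 0` is idle when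
`r·s_i < ε_i` and is a delegator (delegating only to feasible pools) when
`r·s_i ≥ ε_i`, where `r = α(s*, cmin)`. -/
theorem ex_post_SPO_stable_sufficient {n : ℕ}
    (g : ProperDelegationGame n) (cmax : ℝ) (hcmax : ∀ i, g.c i ≤ cmax)
    (f : ℝ → ℝ → ℝ → Bool)
    (hpos : 0 < Def g f)
    (hDefDel : Def g f ≤ ((Del g f : ℝ) : EReal))
    (hDelCap : ((Del g f : ℝ) : EReal) ≤ Cap g f) :
    ∃ p : Fin n → ProperDelegationGame.Action n,
      g.ValidProfile p ∧
      (∀ i, isSPO p i ↔ f (g.s i) (g.c i) (g.eps i) = true) ∧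
      IsPNE g p ∧
      (∀ i, f (g.s i) (g.c i) (g.eps i) = false →
        (rStar g f * g.s i < g.eps i → p i = ProperDelegationGame.Action.idle) ∧
        (g.eps i ≤ rStar g f * g.s i → isDeleg p i)) ∧
      (∀ i (d : Fin n → ℝ), p i = ProperDelegationGame.Action.deleg d →
        ∀ j, 0 < d j → feasible g p j) := by
  have hDel : 0 < Del g f := EReal.coe_pos.1 (hpos.trans_le hDefDel)
  obtain ⟨w, hw⟩ := exists_isContentSplit hDel hDefDel hDelCap
  refine ⟨proportionalProfile g f w, hw.validProfile,
    fun i => isSPO_proportionalProfile_iff.trans mem_spoSet, hw.isPNE,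
    fun i hi => ⟨fun hidle => ?_, fun hdel => ?_⟩, fun i d hd j hj => hw.feasible_of_deleg hd hj⟩
  · refine proportionalProfile_of_notMem (fun h => ?_) fun h => ?_
    · exact Bool.false_ne_true (hi.symm.trans (mem_spoSet.1 h))
    · exact hidle.not_ge (mem_delegatorSet.1 h).2
  · exact isDeleg_proportionalProfile_iff.2 (mem_delegatorSet.2 ⟨hi, hdel⟩)
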